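/- Let β = (1+√5)/2. For J = (j_1,...,j_n) ∈ Ω_n with J strictly less than the maximal element Ĵ in lexicographic order, let J' ∈ Ω_n be the smallest element with J ≺ J'. Then L_{n,J'} = L_{n,J} + j_n β^{−n−1} + (1 − j_n) β^{−n}, and this quantity is strictly less than 1. -/

import Mathlib

open MeasureTheory Real Filter

/-- The golden ratio. -/
noncomputable def gr : ℝ := (1 + Real.sqrt 5) / 2

/-- Binary strings of length `n` with no two consecutive ones. -/
def Omega (n : ℕ) : Finset (Fin n → Fin 2) :=
  Finset.univ.filter fun J =>
    ∀ k : Fin n, ∀ h : k.val + 1 < n, (J k : ℕ) * (J ⟨k.val + 1, h⟩ : ℕ) = 0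

/-- `L (j_1,…,j_n) = ∑ j_k β^{-k}`. -/
noncomputable def L {n : ℕ} (J : Fin n → Fin 2) : ℝ :=
  ∑ k : Fin n, ((J k : ℕ) : ℝ) * gr ^ (-(k.val + 1 : ℤ))

/-- The last digit `j_n` of a string. -/
def lastD {n : ℕ} (J : Fin n → Fin 2) : ℕ :=
  if h : 0 < n then (J ⟨n - 1, Nat.sub_lt h one_pos⟩ : ℕ) else 0

/-- The length of `I_{n,J}`. -/
noncomputable def Ilen {n : ℕ} (J : Fin n → Fin 2) : ℝ :=
  (lastD J : ℝ) * gr ^ (-(n + 1 : ℤ)) + (1 - (lastD J : ℝ)) * gr ^ (-(n : ℤ))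

/-- The interval `I_{n,J}`. -/
noncomputable def Ival {n : ℕ} (J : Fin n → Fin 2) : Set ℝ :=
  Set.Ico (L J) (L J + Ilen J)

/-- The base-β transformation (β = golden ratio). -/
noncomputable def T (x : ℝ) : ℝ := gr * x - ⌊gr * x⌋

/-- The invariant density. -/
noncomputable def fGold (x : ℝ) : ℝ :=
  if x < gr⁻¹ then (1 + gr) / Real.sqrt 5 else gr / Real.sqrt 5

/-- The pdf of `T^n X` when `X` has pdf `f`. -/
noncomputable def evolve (n : ℕ) (f : ℝ → ℝ) (x : ℝ) : ℝ :=
  if x < gr⁻¹ then ∑ J ∈ Omega n, gr ^ (-(n : ℤ)) * f (L J + x * gr ^ (-(n : ℤ)))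
  else ∑ J ∈ (Omega n).filter (fun J => lastD J = 0),
    gr ^ (-(n : ℤ)) * f (L J + x * gr ^ (-(n : ℤ)))

/-- The lexicographically maximal element of `Omega n`. -/
def Jhat (n : ℕ) : Fin n → Fin 2 := fun k => if Odd (k.val + 1) then 1 else 0

/-- Strict lexicographic order on strings. -/
def lexLt {n : ℕ} (J K : Fin n → Fin 2) : Prop :=
  ∃ i : Fin n, (∀ j : Fin n, j < i → J j = K j) ∧ J i < K i

/-!
For a string `J` of length `n` with last digit `d`, write `Ja` for `J` followed by the digit `a`.
Since `β⁻ⁿ = β⁻ⁿ⁻¹ + β⁻ⁿ⁻²`, the right endpoint `L + Ilen` of the interval of `Ja` falls short of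
that of `J` by `(1 - d - a) β⁻ⁿ⁻²`. For admissible strings this is nonnegative, so by induction
every right endpoint is at most `1`.

Let `J'b` be the successor of `Ja`. If `J = J'`, then `a = 0` and `b = 1`, and the claim is read
off. Otherwise `J'` is the successor of `J`, `b = 0`, and `Ja` is the last admissible extension of
`J`, that is, `d + a = 1`. Then appending `b` keeps the left endpoint of `J'` and appending `a`
keeps the right endpoint of `J`, so that these two endpoints agree by induction on the length.
-/

/-- The string `J` followed by the digit `a`. It fixes the type family of the dependent
`Fin.snoc` to be constant, which is otherwise hard to infer where it is used. -/
abbrev snoc {n : ℕ} (J : Fin n → Fin 2) (a : Fin 2) : Fin (n + 1) → Fin 2 :=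
  Fin.snoc J a

lemma gr_pos : 0 < gr := goldenRatio_pos

lemma gr_zpow_neg_eq_add (m : ℤ) : gr ^ (-m) = gr ^ (-(m + 1)) + gr ^ (-(m + 2)) := by
  have hne : gr ≠ 0 := gr_pos.ne'
  have hsq : gr ^ 2 = gr + 1 := goldenRatio_sq
  calc gr ^ (-m) = gr ^ (-(m + 2)) * gr ^ 2 := by
        rw [← zpow_natCast, ← zpow_add₀ hne]; congr 1; push_cast; ring
    _ = gr ^ (-(m + 2)) * gr + gr ^ (-(m + 2)) := by rw [hsq, mul_add_one]
    _ = gr ^ (-(m + 1)) + gr ^ (-(m + 2)) := by rw [← zpow_add_one₀ hne]; congr 2; ring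

section Strings

variable {n : ℕ} {J J' K : Fin n → Fin 2} {a b : Fin 2}

lemma lastD_eq_zero_or_one (J : Fin n → Fin 2) : lastD J = 0 ∨ lastD J = 1 := by
  unfold lastD
  split_ifs <;> omega

lemma lastD_snoc (J : Fin n → Fin 2) (a : Fin 2) : lastD (snoc J a) = a := by
  simp [lastD, Fin.snoc]

lemma L_snoc (J : Fin n → Fin 2) (a : Fin 2) :
    L (snoc J a) = L J + (a : ℕ) * gr ^ (-(n + 1 : ℤ)) := by
  simp [L, Fin.sum_univ_castSucc]

lemma mem_Omega_of_le_one (hn : n ≤ 1) (J : Fin n → Fin 2) : J ∈ Omega n :=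
  Finset.mem_filter.mpr ⟨Finset.mem_univ J, fun _ _ => by omega⟩

lemma snoc_mem_Omega_iff :
    snoc J a ∈ Omega (n + 1) ↔ J ∈ Omega n ∧ lastD J * (a : ℕ) = 0 := by
  cases n with
  | zero => simp [mem_Omega_of_le_one, lastD]
  | succ n => simp [Omega, Fin.forall_fin_succ', lastD, Fin.snoc, Fin.last]

lemma snoc_zero_mem_Omega (hJ : J ∈ Omega n) : snoc J 0 ∈ Omega (n + 1) :=
  snoc_mem_Omega_iff.mpr ⟨hJ, mul_zero _⟩

lemma lexLt_snoc_iff : lexLt (snoc J a) (snoc K b) ↔ lexLt J K ∨ J = K ∧ a < b := by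
  simp [lexLt, Fin.exists_fin_succ', Fin.forall_fin_succ', funext_iff,
    (Fin.le_last _).not_gt]

lemma Ilen_pos (J : Fin n → Fin 2) : 0 < Ilen J := by
  have hpow (m : ℤ) : 0 < gr ^ m := zpow_pos gr_pos m
  rcases lastD_eq_zero_or_one J with h | h <;> simp [Ilen, h, hpow, -zpow_neg]

lemma L_add_Ilen_snoc (J : Fin n → Fin 2) (a : Fin 2) :
    L (snoc J a) + Ilen (snoc J a) + (1 - lastD J - (a : ℕ)) * gr ^ (-(n + 2 : ℤ)) =
      L J + Ilen J := by
  have hexp : ((n + 1 : ℕ) + 1 : ℤ) = n + 2 := by push_cast; ring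
  rw [L_snoc, Ilen, Ilen, lastD_snoc, hexp, Nat.cast_succ, gr_zpow_neg_eq_add n]
  ring

theorem L_add_Ilen_le_one (hJ : J ∈ Omega n) : L J + Ilen J ≤ 1 := by
  induction J using Fin.snocInduction with
  | elim0 => simp [L, Ilen, lastD]
  | @snoc n J a ih =>
    obtain ⟨hJ, hmul⟩ := snoc_mem_Omega_iff.mp hJ
    have hle : (lastD J : ℝ) + (a : ℕ) ≤ 1 := by
      have := lastD_eq_zero_or_one J
      norm_cast
      grind
    have hgap : 0 ≤ (1 - lastD J - (a : ℕ)) * gr ^ (-(n + 2 : ℤ)) :=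
      mul_nonneg (by linarith) (zpow_pos gr_pos _).le
    linarith [L_add_Ilen_snoc J a, ih hJ]

/-- `IsLexSucc J J'` says that `J'` is the smallest element of `Omega n` that is lexicographically
larger than `J`. As the order is total, minimality is encoded by no admissible string lying
strictly between `J` and `J'`. -/
structure IsLexSucc (J J' : Fin n → Fin 2) : Prop where
  mem : J' ∈ Omega n
  lt : lexLt J J'
  not_between : ∀ K ∈ Omega n, lexLt J K → ¬ lexLt K J'

namespace IsLexSucc

lemma of_snoc (h : IsLexSucc (snoc J a) (snoc J' b)) (hlt : lexLt J J') : IsLexSucc J J' where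
  mem := (snoc_mem_Omega_iff.mp h.mem).1
  lt := hlt
  not_between K hK hJK hKJ' := h.not_between (snoc K 0) (snoc_zero_mem_Omega hK)
    (lexLt_snoc_iff.mpr (.inl hJK)) (lexLt_snoc_iff.mpr (.inl hKJ'))

lemma last_eq_zero (h : IsLexSucc (snoc J a) (snoc J' b)) (hlt : lexLt J J') : b = 0 := by
  by_contra hb
  exact h.not_between (snoc J' 0) (snoc_zero_mem_Omega (h.of_snoc hlt).mem)
    (lexLt_snoc_iff.mpr (.inl hlt)) (lexLt_snoc_iff.mpr (.inr ⟨rfl, Fin.pos_of_ne_zero hb⟩))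

lemma lastD_add_eq_one (h : IsLexSucc (snoc J a) (snoc J' b)) (hJ : snoc J a ∈ Omega (n + 1))
    (hlt : lexLt J J') : lastD J + (a : ℕ) = 1 := by
  obtain ⟨hinit, hmul⟩ := snoc_mem_Omega_iff.mp hJ
  have hne : ¬ (lastD J = 0 ∧ a = 0) := by
    rintro ⟨hlast, rfl⟩
    exact h.not_between (snoc J 1) (snoc_mem_Omega_iff.mpr ⟨hinit, by simp [hlast]⟩)
      (lexLt_snoc_iff.mpr (.inr ⟨rfl, Fin.zero_lt_one⟩)) (lexLt_snoc_iff.mpr (.inl hlt))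
  have := lastD_eq_zero_or_one J
  grind

theorem L_eq_add_Ilen (h : IsLexSucc J J') (hJ : J ∈ Omega n) : L J' = L J + Ilen J := by
  induction n with
  | zero => exact h.lt.choose.elim0
  | succ n ih =>
    obtain ⟨J, a, rfl⟩ : ∃ K c, J = snoc K c := ⟨_, _, (Fin.snoc_init_self J).symm⟩
    obtain ⟨J', b, rfl⟩ : ∃ K c, J' = snoc K c := ⟨_, _, (Fin.snoc_init_self J').symm⟩
    rcases lexLt_snoc_iff.mp h.lt with hlt | ⟨rfl, hab⟩
    · have hlast : (lastD J : ℝ) + (a : ℕ) = 1 := mod_cast h.lastD_add_eq_one hJ hlt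
      have hinit : L J' = L J + Ilen J := ih (h.of_snoc hlt) (snoc_mem_Omega_iff.mp hJ).1
      calc L (snoc J' b) = L J' := by simp [L_snoc, h.last_eq_zero hlt]
        _ = L J + Ilen J := hinit
        _ = L (snoc J a) + Ilen (snoc J a) := by
          rw [← L_add_Ilen_snoc J a, sub_sub, hlast, sub_self, zero_mul, add_zero]
    · obtain ⟨rfl, rfl⟩ : a = 0 ∧ b = 1 := by omega
      simp [L_snoc, Ilen, lastD_snoc]

end IsLexSucc

end Strings

theorem L_succ (n : ℕ) (hn : 0 < n) (J J' : Fin n → Fin 2)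
    (hJ : J ∈ Omega n) (hJhat : lexLt J (Jhat n))
    (hJ' : J' ∈ Omega n) (hlt : lexLt J J')
    (hmin : ∀ K ∈ Omega n, lexLt J K → ¬ lexLt K J') :
    L J' = L J + (lastD J : ℝ) * gr ^ (-(n + 1 : ℤ))
        + (1 - (lastD J : ℝ)) * gr ^ (-(n : ℤ)) ∧
    L J + (lastD J : ℝ) * gr ^ (-(n + 1 : ℤ))
        + (1 - (lastD J : ℝ)) * gr ^ (-(n : ℤ)) < 1 := by
  have hsucc : IsLexSucc J J' := ⟨hJ', hlt, hmin⟩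
  rw [add_assoc, ← Ilen, ← hsucc.L_eq_add_Ilen hJ]
  exact ⟨rfl, (lt_add_of_pos_right _ (Ilen_pos J')).trans_le (L_add_Ilen_le_one hJ')⟩
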